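/- Let Â = A + εB be an n×n dual matrix possessing a dual group generalized inverse Ĝ, and let G be a group inverse of A. Then Ĝ = G − ε·G·B·G if and only if B·(Iₙ − A·G) = 0 and (Iₙ − A·G)·B = 0. -/

import Mathlib

open Matrix

/-- The dual matrix `A + εB`, viewed as a matrix over the dual numbers `ℝ[ε]`. -/
def dm {n : ℕ} (A B : Matrix (Fin n) (Fin n) ℝ) :
    Matrix (Fin n) (Fin n) (DualNumber ℝ) :=
  fun i j => TrivSqZeroExt.inl (A i j) + TrivSqZeroExt.inr (B i j)

/-- A dual matrix has dual index one iff its column space equals that of its square,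
equivalently (as shown in the paper) there is a dual matrix `X` with `M² * X = M`. -/
def DualIndexOne {n : ℕ} (M : Matrix (Fin n) (Fin n) (DualNumber ℝ)) : Prop :=
  ∃ X : Matrix (Fin n) (Fin n) (DualNumber ℝ), M * M * X = M

/-- `G` is a group inverse of the real matrix `A`. -/
def IsGroupInv {n : ℕ} (A G : Matrix (Fin n) (Fin n) ℝ) : Prop :=
  A * G * A = A ∧ G * A * G = G ∧ A * G = G * A

/-- `X` is the Moore–Penrose inverse of the real matrix `A`. -/
def IsMoorePenrose {n : ℕ} (A X : Matrix (Fin n) (Fin n) ℝ) : Prop :=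
  A * X * A = A ∧ X * A * X = X ∧ (A * X)ᵀ = A * X ∧ (X * A)ᵀ = X * A

/-- `C` is a core inverse of the real matrix `A`. -/
def IsCoreInv {n : ℕ} (A C : Matrix (Fin n) (Fin n) ℝ) : Prop :=
  A * C * A = A ∧ A * (C * C) = C ∧ (A * C)ᵀ = A * C

/-- `G` is a dual group generalized inverse (DGGI) of the dual matrix `M`. -/
def IsDGGI {n : ℕ} (M G : Matrix (Fin n) (Fin n) (DualNumber ℝ)) : Prop :=
  M * G * M = M ∧ G * M * G = G ∧ M * G = G * M

/-- `X` is a dual Moore–Penrose generalized inverse (DMPGI) of the dual matrix `M`. -/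
def IsDMPGI {n : ℕ} (M X : Matrix (Fin n) (Fin n) (DualNumber ℝ)) : Prop :=
  M * X * M = M ∧ X * M * X = X ∧ (M * X)ᵀ = M * X ∧ (X * M)ᵀ = X * M

/-- `G` is a dual core generalized inverse (DCGI) of the dual matrix `M`. -/
def IsDCGI {n : ℕ} (M G : Matrix (Fin n) (Fin n) (DualNumber ℝ)) : Prop :=
  M * G * M = M ∧ M * (G * G) = G ∧ (M * G)ᵀ = M * G

theorem dm_mul_dm {n : ℕ} (A B C D : Matrix (Fin n) (Fin n) ℝ) :
    dm A B * dm C D = dm (A * C) (A * D + B * C) := by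
  ext i j
  · simp [dm, Matrix.mul_apply, TrivSqZeroExt.fst_sum]
  · simp [dm, Matrix.mul_apply, TrivSqZeroExt.snd_sum, Finset.sum_add_distrib, mul_comm]

theorem dm_inj_snd {n : ℕ} {A B C D : Matrix (Fin n) (Fin n) ℝ}
    (h : dm A B = dm C D) : B = D := by
  ext i j
  have := congrArg TrivSqZeroExt.snd (congrFun (congrFun h i) j)
  simpa [dm] using this

theorem groupInv_unique {R : Type*} [Monoid R] {M X Y : R}
    (x1 : M * X * M = M) (x2 : X * M * X = X) (x3 : M * X = X * M)
    (y1 : M * Y * M = M) (y2 : Y * M * Y = Y) (y3 : M * Y = Y * M) : X = Y := by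
  have e : M * Y = M * X := by
    calc M * Y = M * X * M * Y := by rw [x1]
      _ = X * (M * (M * Y)) := by rw [x3]; simp only [mul_assoc]
      _ = X * (M * Y * M) := by rw [mul_assoc M Y M, ← y3]
      _ = M * X := by rw [y1, x3]
  calc X = X * M * X := x2.symm
    _ = X * (M * Y) := by rw [e, mul_assoc]
    _ = X * M * Y := by rw [mul_assoc]
    _ = Y * M * Y := by rw [← x3, ← e, y3]
    _ = Y := y2

theorem stmt17 {n : ℕ} (A B G : Matrix (Fin n) (Fin n) ℝ)
    (Ghat : Matrix (Fin n) (Fin n) (DualNumber ℝ))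
    (hGhat : IsDGGI (dm A B) Ghat) (hG : IsGroupInv A G) :
    Ghat = dm G (-(G * B * G)) ↔
      B * (1 - A * G) = 0 ∧ (1 - A * G) * B = 0 := by
  obtain ⟨g1, g2, g3⟩ := hG
  obtain ⟨d1, d2, d3⟩ := hGhat
  constructor
  · intro h
    subst h
    simp only [dm_mul_dm] at d1 d3
    have e3 := dm_inj_snd d3
    have e1 := dm_inj_snd d1
    have k : G * B * (1 - A * G) = 0 := by
      have h1 : A * G * (A * -(G * B * G) + B * G) = 0 := by
        calc _ = -((A * G * A) * (G * B * G)) + A * G * B * G := by noncomm_ring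
          _ = 0 := by rw [g1]; noncomm_ring
      rw [e3, g3] at h1
      calc G * B * (1 - A * G) = (G * A * G) * B * (1 - G * A) := by rw [g2, g3]
        _ = G * A * (G * B + -(G * B * G) * A) := by noncomm_ring
        _ = 0 := h1
    have k0 : A * -(G * B * G) + B * G = 0 := by
      rw [e3]
      calc _ = G * B * (1 - G * A) := by noncomm_ring
        _ = 0 := by rw [← g3, k]
    rw [k0, zero_mul, add_zero] at e1
    refine ⟨?_, ?_⟩
    · calc B * (1 - A * G) = A * G * B * (1 - A * G) := by rw [e1]
        _ = A * (G * B * (1 - A * G)) := by noncomm_ring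
        _ = 0 := by rw [k, mul_zero]
    · rw [sub_mul, e1, one_mul, sub_self]
  · rintro ⟨h1, h2⟩
    have b1 : B * (A * G) = B := by
      rw [mul_sub, mul_one, sub_eq_zero] at h1; exact h1.symm
    have b2 : A * G * B = B := by
      rw [sub_mul, one_mul, sub_eq_zero] at h2; exact h2.symm
    have l : dm A B * dm G (-(G * B * G)) = dm (A * G) 0 := by
      rw [dm_mul_dm]
      congr 1
      calc _ = -(A * G * B * G) + B * G := by noncomm_ring
        _ = 0 := by rw [b2]; simp
    have r : dm G (-(G * B * G)) * dm A B = dm (A * G) 0 := by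
      rw [dm_mul_dm, g3]
      congr 1
      calc _ = G * B + -(G * (B * (G * A))) := by noncomm_ring
        _ = 0 := by rw [← g3, b1]; simp
    refine groupInv_unique d1 d2 d3 ?_ ?_ (l.trans r.symm)
    · rw [l, dm_mul_dm, g1, b2]; simp
    · rw [r, dm_mul_dm, g3, g2]
      congr 1
      calc _ = -((G * A * G) * B * G) := by noncomm_ring
        _ = _ := by rw [g2]
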